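/- Let X be a real Banach space, p ≥ 1, B : X → X a continuous linear operator with B^p = 0, and f : ℝ → X a p times differentiable function. Then x(t) := −Σ_{k=0}^{p−1} B^k (f^{(k)}(t)) is differentiable and satisfies B(x'(t)) = x(t) + f(t) for all t, and it is the unique differentiable solution of this equation on ℝ. -/

import Mathlib

theorem aux_unique {X : Type*} [NormedAddCommGroup X] [NormedSpace ℝ X]
    (B : X →L[ℝ] X) (z : ℝ → X) (hz : Differentiable ℝ z)
    (h : ∀ t, B (deriv z t) = z t) (n : ℕ) :
    (∀ t, (B ^ n) (z t) = 0) → ∀ t, z t = 0 := by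
  induction n with
  | zero => intro h0 t; simpa using h0 t
  | succ n ih =>
    intro h0
    apply ih
    intro t
    have h1 : HasDerivAt (fun s => (B ^ (n + 1)) (z s)) ((B ^ (n + 1)) (deriv z t)) t :=
      (B ^ (n + 1)).hasFDerivAt.comp_hasDerivAt t (hz t).hasDerivAt
    have h2 : (fun s => (B ^ (n + 1)) (z s)) = fun _ => (0 : X) := funext h0
    rw [h2] at h1
    have h3 := h1.unique (hasDerivAt_const t (0 : X))
    rw [pow_succ] at h3
    rw [← h t]
    exact h3

/-- if `B ^ p = 0` with `p ≥ 1` and `f` is `p` times differentiable,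
then `x t = -∑_{k<p} B^k (f^{(k)} t)` is differentiable, solves
`B x' = x + f`, and is the unique differentiable solution on `ℝ`. -/
theorem stmt9
    {X : Type*} [NormedAddCommGroup X] [NormedSpace ℝ X] [CompleteSpace X]
    (p : ℕ) (hp : 1 ≤ p)
    (B : X →L[ℝ] X) (hBp : B ^ p = 0)
    (f : ℝ → X) (hf : ∀ k < p, Differentiable ℝ (iteratedDeriv k f)) :
    Differentiable ℝ (fun t => -∑ k ∈ Finset.range p, (B ^ k) (iteratedDeriv k f t)) ∧
      (∀ t : ℝ,
        B (deriv (fun s => -∑ k ∈ Finset.range p, (B ^ k) (iteratedDeriv k f s)) t)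
          = (-∑ k ∈ Finset.range p, (B ^ k) (iteratedDeriv k f t)) + f t) ∧
      ∀ y : ℝ → X, Differentiable ℝ y → (∀ t : ℝ, B (deriv y t) = y t + f t) →
        y = fun t => -∑ k ∈ Finset.range p, (B ^ k) (iteratedDeriv k f t) := by
  have hx : ∀ t, HasDerivAt
      (fun s => -∑ k ∈ Finset.range p, (B ^ k) (iteratedDeriv k f s))
      (-∑ k ∈ Finset.range p, (B ^ k) (iteratedDeriv (k + 1) f t)) t := by
    intro t
    apply HasDerivAt.fun_neg
    apply HasDerivAt.fun_sum
    intro k hk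
    rw [iteratedDeriv_succ]
    exact (B ^ k).hasFDerivAt.comp_hasDerivAt t
      (hf k (Finset.mem_range.mp hk) t).hasDerivAt
  have heq : ∀ t : ℝ,
        B (deriv (fun s => -∑ k ∈ Finset.range p, (B ^ k) (iteratedDeriv k f s)) t)
          = (-∑ k ∈ Finset.range p, (B ^ k) (iteratedDeriv k f t)) + f t := by
    intro t
    rw [(hx t).deriv, map_neg, map_sum]
    have h1 := Finset.sum_range_succ (fun k => (B ^ k) (iteratedDeriv k f t)) p
    rw [Finset.sum_range_succ'] at h1
    simp only [hBp, pow_zero, iteratedDeriv_zero, zero_apply, add_zero,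
      ContinuousLinearMap.zero_apply, ContinuousLinearMap.one_apply] at h1
    have h2 : ∑ k ∈ Finset.range p, B ((B ^ k) (iteratedDeriv (k + 1) f t))
        = ∑ k ∈ Finset.range p, (B ^ (k + 1)) (iteratedDeriv (k + 1) f t) := by
      refine Finset.sum_congr rfl fun k _ => ?_
      rw [pow_succ']
      rfl
    rw [h2, ← h1]
    abel
  refine ⟨fun t => (hx t).differentiableAt, heq, ?_⟩
  intro y hy hyeq
  funext t
  refine sub_eq_zero.mp (aux_unique B
    (fun t => y t - -∑ k ∈ Finset.range p, (B ^ k) (iteratedDeriv k f t))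
    (fun t => (hy t).fun_sub (hx t).differentiableAt) ?_ p ?_ t)
  · intro t
    rw [deriv_fun_sub (hy t) (hx t).differentiableAt, map_sub, hyeq, heq]
    abel
  · intro t
    rw [hBp]
    rfl
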